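/- Let L be a positive definite 𝒪-lattice of rank two that contains a 6-vector z and is spanned as an 𝒪-module by z together with the 3-vectors of L. Then there is an 𝒪-basis (e₁, e₂) of L such that exactly one of the following holds: (δ₆) z = e₁ + e₂ and the Gram matrix of ψ is [[3, θ],[−θ, 3]] (discriminant 6); (δ₉) z = e₁ + e₂ and the Gram matrix is [[3, 0],[0, 3]] (discriminant 9); (δ₁₅) z = e₁ and the Gram matrix is [[6, θ],[−θ, 3]] (discriminant 15); (δ₁₈) z = e₁ and the Gram matrix is [[6, 0],[0, 3]] (discriminant 18). Moreover, if M is an 𝒪-lattice of rank two containing L as a proper 𝒪-submodule with the same Hermitian form, then L is of type δ₁₈ and M is isomorphic as an 𝒪-lattice to the lattice of type δ₆. -/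

import Mathlib

open Polynomial

noncomputable section

/-- The Eisenstein ring `𝒪 = ℤ[ω]`, where `ω = e^{2πi/6}` is a primitive sixth root of
unity (so `ω² - ω + 1 = 0`), presented as `ℤ[X]/(X² - X + 1)`. -/
abbrev O : Type := AdjoinRoot (X ^ 2 - X + 1 : ℤ[X])

/-- `ω`, the distinguished primitive sixth root of unity in `𝒪`. -/
def ω : O := AdjoinRoot.root _

lemma ω_sq : ω ^ 2 - ω + 1 = 0 := by
  have h := AdjoinRoot.eval₂_root (X ^ 2 - X + 1 : ℤ[X])
  simpa [ω, eval₂_add, eval₂_sub, eval₂_pow, eval₂_X, eval₂_one] using h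

/-- Complex conjugation on the Eisenstein ring: the ring involution with
`conj ω = 1 - ω = ω⁻¹`. -/
def conj : O →+* O :=
  AdjoinRoot.lift (algebraMap ℤ O) (1 - ω) (by
    have h := ω_sq
    simp only [eval₂_add, eval₂_sub, eval₂_pow, eval₂_X, eval₂_one]
    ring_nf
    ring_nf at h
    linear_combination h)

/-- `θ := ω - ω⁻¹ = ω - conj ω = 2ω - 1`, a square root of `-3` in `𝒪`. -/
def θ : O := ω - conj ω

/-!
By Cauchy-Schwarz, a `3`-vector `x` has `ψ x z = θ c` with `|c|² ≤ 6`, so that up to a unit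
`ψ x z` is `-θ`, `3`, `3 + θ` or `0`.  In the first case `(z, x)`, in the next two `(x, z - x)`, and
in the last one `(z, x)` is a pair with one of the four Gram matrices.

That such a pair `(e, f)`, of discriminant `3d`, generates the lattice is seen on discriminants: if
`d • m = p • e + q • f`, then the discriminant of `(m, f)` is `|p|² / d²` times `3d`.  Any
discriminant is `3t` with `t ≢ 1` mod `3`, the norms of `𝒪` being `0` or `1` mod `3`.  Hence
`|p|² = dt`, and for `d = 2, 3, 5` this forces `d ∣ p`; by symmetry `d ∣ q`.  For `d = 6` it only
forces `2θ ∣ p`.  A vector outside the span of the orthogonal pair `(z, x)` then gives, after a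
shift by that span, a vector `y` with `θ y = z ± x`, and `(± x, y)` is a pair of type `δ₆`.  In
particular `y` is a `3`-vector which is not orthogonal to `z`.
-/

namespace EisensteinLattice

/-! ### Arithmetic of the Eisenstein integers -/

instance : IsDomain O :=
  AdjoinRoot.isDomain_of_prime <| by
    rw [← cyclotomic_six]
    exact (cyclotomic.irreducible (by norm_num)).prime

instance : CharZero O :=
  charZero_of_injective_algebraMap (R := ℤ) <|
    AdjoinRoot.of.injective_of_degree_ne_zero <| by
      rw [← cyclotomic_six, degree_cyclotomic]
      decide

lemma conj_ω : conj ω = 1 - ω := AdjoinRoot.lift_root _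

lemma θ_eq : θ = 2 * ω - 1 := by rw [θ, conj_ω]; ring

lemma conj_θ : conj θ = -θ := by
  simp only [θ_eq, map_sub, map_mul, map_ofNat, map_one, conj_ω]
  ring

lemma θ_sq : θ ^ 2 = -3 := by
  rw [θ_eq]
  linear_combination 4 * ω_sq

lemma θ_ne_zero : θ ≠ 0 := by
  intro h
  simpa [h] using θ_sq

lemma exists_eq_add_mul_ω (c : O) : ∃ a b : ℤ, c = a + b * ω := by
  obtain ⟨p, rfl⟩ := AdjoinRoot.mk_surjective c
  have hmonic : (X ^ 2 - X + 1 : ℤ[X]).Monic := by monicity!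
  have hdeg : (X ^ 2 - X + 1 : ℤ[X]).natDegree = 2 := by compute_degree!
  have hlt : (p %ₘ (X ^ 2 - X + 1)).natDegree < 2 :=
    (natDegree_modByMonic_lt p hmonic fun h => by simp [h] at hdeg).trans_eq hdeg
  obtain ⟨b, a, hba⟩ := exists_eq_X_add_C_of_natDegree_le_one (Nat.le_of_lt_succ hlt)
  refine ⟨a, b, ?_⟩
  rw [← AdjoinRoot.mk_leftInverse hmonic (AdjoinRoot.mk _ p), AdjoinRoot.modByMonicHom_mk, hba,
    map_add, map_mul, AdjoinRoot.mk_X, AdjoinRoot.mk_C, AdjoinRoot.mk_C, eq_intCast, eq_intCast,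
    add_comm, ω]

lemma conj_add_mul_ω (a b : ℤ) : conj (a + b * ω) = a + b - b * ω := by
  simp only [map_add, map_mul, map_intCast, conj_ω]
  ring

lemma conj_conj (c : O) : conj (conj c) = c := by
  obtain ⟨a, b, rfl⟩ := exists_eq_add_mul_ω c
  rw [conj_add_mul_ω, map_sub, map_mul, map_add, conj_ω, map_intCast, map_intCast]
  ring

lemma add_mul_ω_mul_conj (a b : ℤ) :
    (a + b * ω) * conj (a + b * ω) = ((a ^ 2 + a * b + b ^ 2 : ℤ) : O) := by
  rw [conj_add_mul_ω]
  push_cast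
  linear_combination -(b : O) ^ 2 * ω_sq

lemma exists_intCast_eq_mul_conj (c : O) : ∃ n : ℤ, (n : O) = c * conj c := by
  obtain ⟨a, b, rfl⟩ := exists_eq_add_mul_ω c
  exact ⟨_, (add_mul_ω_mul_conj a b).symm⟩

/-- The norm `c ↦ c * conj c` of the Eisenstein integers, as an integer.  It is characterized
by `intCast_intNorm`. -/
def intNorm (c : O) : ℤ := (exists_intCast_eq_mul_conj c).choose

lemma intCast_intNorm (c : O) : (intNorm c : O) = c * conj c :=
  (exists_intCast_eq_mul_conj c).choose_spec

lemma intNorm_eq_iff {c : O} {n : ℤ} : intNorm c = n ↔ c * conj c = n := by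
  rw [← intCast_intNorm, Int.cast_inj]

lemma intNorm_add_mul_ω (a b : ℤ) : intNorm (a + b * ω) = a ^ 2 + a * b + b ^ 2 :=
  intNorm_eq_iff.2 (add_mul_ω_mul_conj a b)

lemma intNorm_mul (c d : O) : intNorm (c * d) = intNorm c * intNorm d := by
  rw [intNorm_eq_iff, map_mul]
  push_cast
  rw [intCast_intNorm, intCast_intNorm]
  ring

lemma intNorm_intCast (n : ℤ) : intNorm n = n ^ 2 := by
  rw [intNorm_eq_iff, map_intCast]
  push_cast
  ring

lemma intNorm_θ : intNorm θ = 3 := by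
  rw [intNorm_eq_iff, conj_θ]
  push_cast
  linear_combination -θ_sq

lemma intNorm_conj (c : O) : intNorm (conj c) = intNorm c := by
  rw [intNorm_eq_iff, conj_conj, intCast_intNorm, mul_comm]

lemma intNorm_nonneg (c : O) : 0 ≤ intNorm c := by
  obtain ⟨a, b, rfl⟩ := exists_eq_add_mul_ω c
  rw [intNorm_add_mul_ω]
  nlinarith [sq_nonneg (a + b), sq_nonneg a, sq_nonneg b]

lemma intNorm_eq_zero {c : O} : intNorm c = 0 ↔ c = 0 := by
  rw [intNorm_eq_iff, Int.cast_zero, mul_eq_zero, or_iff_left_of_imp]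
  intro h
  rw [← conj_conj c, h, map_zero]

lemma exists_intCast_eq_of_conj_eq {c : O} (h : conj c = c) : ∃ n : ℤ, c = n := by
  obtain ⟨a, b, rfl⟩ := exists_eq_add_mul_ω c
  rw [conj_add_mul_ω] at h
  have hb : (b : O) * θ = 0 := by
    rw [θ_eq]
    linear_combination -h
  have hb0 : (b : O) = 0 := (mul_eq_zero.1 hb).resolve_right θ_ne_zero
  exact ⟨a, by rw [hb0, zero_mul, add_zero]⟩

lemma three_dvd_of_θ_dvd_intCast {n : ℤ} (h : θ ∣ (n : O)) : 3 ∣ n := by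
  obtain ⟨c, hc⟩ := h
  refine Int.prime_three.dvd_of_dvd_pow (n := 2) ⟨intNorm c, ?_⟩
  rw [← intNorm_intCast, hc, intNorm_mul, intNorm_θ]

lemma exists_residue_mod_θ (c : O) :
    ∃ r : ℤ, (r = 0 ∨ r = 1 ∨ r = -1) ∧ θ ∣ c - r ∧ intNorm c ≡ r ^ 2 [ZMOD 3] := by
  obtain ⟨a, b, rfl⟩ := exists_eq_add_mul_ω c
  obtain ⟨r, k, hr, hk⟩ : ∃ r k : ℤ, (r = 0 ∨ r = 1 ∨ r = -1) ∧ a - b = 3 * k + r :=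
    ⟨a - b - 3 * ((a - b + 1) / 3), (a - b + 1) / 3, by omega, by omega⟩
  obtain rfl : a = b + 3 * k + r := by omega
  refine ⟨r, hr, ⟨b * (1 - ω) - k * θ, ?_⟩, ?_⟩
  · rw [θ_eq]
    push_cast
    linear_combination (2 * b + 4 * k : O) * ω_sq
  · rw [intNorm_add_mul_ω]
    exact (Int.modEq_iff_dvd.2 ⟨b ^ 2 + 3 * b * k + b * r + 3 * k ^ 2 + 2 * k * r, by ring⟩).symm

lemma intNorm_emod_three (c : O) : intNorm c % 3 = 0 ∨ intNorm c % 3 = 1 := by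
  obtain ⟨r, rfl | rfl | rfl, -, h⟩ := exists_residue_mod_θ c
  · exact Or.inl h
  · exact Or.inr h
  · exact Or.inr h

lemma θ_dvd_of_three_dvd_intNorm {c : O} (h : 3 ∣ intNorm c) : θ ∣ c := by
  obtain ⟨r, rfl | rfl | rfl, hr, hn⟩ := exists_residue_mod_θ c
  · simpa using hr
  all_goals
    rw [Int.ModEq] at hn
    omega

lemma eq_zero_of_sq_add_mul_add_sq_eq_zero {p : ℕ} [Fact p.Prime] (hp : p % 3 = 2) {x y : ZMod p}
    (h : x ^ 2 + x * y + y ^ 2 = 0) : y = 0 := by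
  by_contra hy
  obtain ⟨t, rfl⟩ : ∃ t, x = t * y := ⟨x / y, (div_mul_cancel₀ x hy).symm⟩
  have ht : t ^ 2 + t + 1 = 0 := by
    refine (mul_eq_zero.1 (?_ : (t ^ 2 + t + 1) * y ^ 2 = 0)).resolve_right (pow_ne_zero 2 hy)
    linear_combination h
  have hcube : t ^ 3 = 1 := by linear_combination (t - 1) * ht
  -- `t ^ p = t` by Fermat, while `t ^ p = t ^ 2` as `t` is a cube root of unity.
  have hsq : t ^ 2 = t := by
    rw [← hp, ← pow_eq_pow_mod p hcube, ZMod.pow_card]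
  have hthree : ((3 : ℕ) : ZMod p) = 0 := by
    push_cast
    linear_combination (3 - 2 * t) * ht + (1 + 2 * t) * hsq
  rw [ZMod.natCast_eq_zero_iff, Nat.prime_dvd_prime_iff_eq Fact.out Nat.prime_three] at hthree
  omega

lemma natCast_dvd_of_dvd_intNorm {p : ℕ} (hp : p.Prime) (hp3 : p % 3 = 2) {c : O}
    (h : (p : ℤ) ∣ intNorm c) : (p : O) ∣ c := by
  have : Fact p.Prime := ⟨hp⟩
  obtain ⟨a, b, rfl⟩ := exists_eq_add_mul_ω c
  rw [intNorm_add_mul_ω, ← ZMod.intCast_zmod_eq_zero_iff_dvd] at h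
  push_cast at h
  have hb := eq_zero_of_sq_add_mul_add_sq_eq_zero hp3 h
  have ha : (a : ZMod p) = 0 :=
    eq_zero_of_sq_add_mul_add_sq_eq_zero hp3 (x := (b : ZMod p)) (by linear_combination h)
  rw [ZMod.intCast_zmod_eq_zero_iff_dvd] at ha hb
  obtain ⟨a, rfl⟩ := ha
  obtain ⟨b, rfl⟩ := hb
  exact ⟨a + b * ω, by push_cast; ring⟩

lemma two_dvd_of_two_dvd_intNorm {c : O} (h : 2 ∣ intNorm c) : 2 ∣ c :=
  mod_cast natCast_dvd_of_dvd_intNorm Nat.prime_two rfl (mod_cast h)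

lemma five_dvd_of_five_dvd_intNorm {c : O} (h : 5 ∣ intNorm c) : 5 ∣ c :=
  mod_cast natCast_dvd_of_dvd_intNorm Nat.prime_five rfl (mod_cast h)

lemma intNorm_two_mul (c : O) : intNorm (2 * c) = 4 * intNorm c := by
  rw [intNorm_mul, show intNorm 2 = 4 from mod_cast intNorm_intCast 2]

lemma intNorm_five_mul (c : O) : intNorm (5 * c) = 25 * intNorm c := by
  rw [intNorm_mul, show intNorm 5 = 25 from mod_cast intNorm_intCast 5]

lemma intNorm_θ_mul (c : O) : intNorm (θ * c) = 3 * intNorm c := by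
  rw [intNorm_mul, intNorm_θ]

lemma two_mul_θ_dvd_of_six_dvd_intNorm {c : O} (h : 6 ∣ intNorm c) : 2 * θ ∣ c := by
  obtain ⟨c, rfl⟩ := two_dvd_of_two_dvd_intNorm (dvd_trans (by norm_num) h)
  rw [intNorm_two_mul] at h
  exact mul_dvd_mul_left 2 (θ_dvd_of_three_dvd_intNorm (by omega))

lemma eq_unit_mul_of_intNorm_le_six {c : O} (hc : c ≠ 0) (hle : intNorm c ≤ 6) :
    ∃ v, intNorm v = 1 ∧ (c = v ∨ c = θ * v ∨ c = 2 * v) := by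
  have hpos : 0 < intNorm c := (intNorm_nonneg c).lt_of_ne' (intNorm_eq_zero.not.2 hc)
  by_cases htwo : 2 ∣ intNorm c
  · obtain ⟨v, rfl⟩ := two_dvd_of_two_dvd_intNorm htwo
    rw [intNorm_two_mul] at hle hpos
    exact ⟨v, by omega, Or.inr (Or.inr rfl)⟩
  by_cases hthree : 3 ∣ intNorm c
  · obtain ⟨v, rfl⟩ := θ_dvd_of_three_dvd_intNorm hthree
    rw [intNorm_θ_mul] at hle hpos htwo
    exact ⟨v, by omega, Or.inr (Or.inl rfl)⟩
  by_cases hfive : 5 ∣ intNorm c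
  · obtain ⟨v, rfl⟩ := five_dvd_of_five_dvd_intNorm hfive
    rw [intNorm_five_mul] at hle hpos
    omega
  have hone : intNorm c = 1 := by interval_cases intNorm c <;> omega
  exact ⟨c, hone, Or.inl rfl⟩

lemma exists_unit_mul_eq_of_intNorm_le_six {c : O} (hc : c ≠ 0) (hle : intNorm c ≤ 6) :
    ∃ u, intNorm u = 1 ∧ (u * c = -1 ∨ u * c = -θ ∨ u * c = 1 - θ) := by
  obtain ⟨v, hv, h⟩ := eq_unit_mul_of_intNorm_le_six hc hle
  have hvc : v * conj v = 1 := mod_cast intNorm_eq_iff.1 hv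
  have hneg : intNorm (-conj v) = 1 := by
    rw [intNorm_eq_iff, map_neg, conj_conj]
    push_cast
    linear_combination hvc
  rcases h with rfl | rfl | rfl
  · exact ⟨-conj c, hneg, Or.inl (by linear_combination -hvc)⟩
  · exact ⟨-conj v, hneg, Or.inr (Or.inl (by linear_combination -θ * hvc))⟩
  · refine ⟨conj (ω * v), ?_, Or.inr (Or.inr ?_)⟩
    · rw [intNorm_conj, intNorm_mul, hv, mul_one]
      simpa using intNorm_add_mul_ω 0 1
    · rw [map_mul, conj_ω, θ_eq]
      linear_combination 2 * (1 - ω) * hvc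

lemma intCast_dvd_of_intNorm_eq_mul {d t : ℤ} {c : O} (hd : d = 2 ∨ d = 3 ∨ d = 5)
    (h : intNorm c = d * t) (ht : t % 3 ≠ 1) : (d : O) ∣ c := by
  rcases hd with rfl | rfl | rfl
  · exact mod_cast two_dvd_of_two_dvd_intNorm ⟨t, h⟩
  · obtain ⟨c, rfl⟩ := θ_dvd_of_three_dvd_intNorm ⟨t, h⟩
    rw [intNorm_θ_mul] at h
    have hmod := intNorm_emod_three c
    obtain ⟨c, rfl⟩ := θ_dvd_of_three_dvd_intNorm (c := c) (by omega)
    refine ⟨-c, ?_⟩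
    push_cast
    linear_combination c * θ_sq
  · exact mod_cast five_dvd_of_five_dvd_intNorm ⟨t, h⟩

/-! ### Gram matrices -/

section Gram

variable {M : Type*}

/-- The Gram matrix of `ψ` on the pair `(e, f)` is `[[a, b], [c, d]]`. -/
def HasGram (ψ : M → M → O) (e f : M) (a b c d : O) : Prop :=
  ψ e e = a ∧ ψ e f = b ∧ ψ f e = c ∧ ψ f f = d

/-- The determinant of the Gram matrix of `ψ` on the pair `(e, f)`; it is the discriminant of
the lattice with basis `(e, f)`. -/
def gramDet (ψ : M → M → O) (e f : M) : O := ψ e e * ψ f f - ψ e f * ψ f e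

lemma HasGram.gramDet_eq {ψ : M → M → O} {e f : M} {a b c d : O} (h : HasGram ψ e f a b c d) :
    gramDet ψ e f = a * d - b * c := by
  obtain ⟨rfl, rfl, rfl, rfl⟩ := h
  rfl

lemma gramDet_comm (ψ : M → M → O) (e f : M) : gramDet ψ e f = gramDet ψ f e := by
  unfold gramDet
  ring

lemma eq_zero_and_eq_zero_of_gramDet_ne_zero {ψ : M → M → O} {e f : M}
    (hdet : gramDet ψ e f ≠ 0) {a b : O} (he : a * ψ e e + b * ψ f e = 0)
    (hf : a * ψ e f + b * ψ f f = 0) : a = 0 ∧ b = 0 := by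
  constructor
  · refine (mul_eq_zero.1 (?_ : a * gramDet ψ e f = 0)).resolve_right hdet
    rw [gramDet]
    linear_combination ψ f f * he - ψ f e * hf
  · refine (mul_eq_zero.1 (?_ : b * gramDet ψ e f = 0)).resolve_right hdet
    rw [gramDet]
    linear_combination ψ e e * hf - ψ e f * he

variable [Add M]

/-- `(e₁, e₂)` is a pair of type `δ₆` relative to the `6`-vector `z`. -/
def IsDeltaSix (ψ : M → M → O) (z e₁ e₂ : M) : Prop :=
  z = e₁ + e₂ ∧ HasGram ψ e₁ e₂ 3 θ (-θ) 3

/-- `(e₁, e₂)` is a pair of type `δ₉` relative to the `6`-vector `z`. -/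
def IsDeltaNine (ψ : M → M → O) (z e₁ e₂ : M) : Prop :=
  z = e₁ + e₂ ∧ HasGram ψ e₁ e₂ 3 0 0 3

/-- `(e₁, e₂)` is a pair of type `δ₁₅` relative to the `6`-vector `z`. -/
def IsDeltaFifteen (ψ : M → M → O) (z e₁ e₂ : M) : Prop :=
  z = e₁ ∧ HasGram ψ e₁ e₂ 6 θ (-θ) 3

/-- `(e₁, e₂)` is a pair of type `δ₁₈` relative to the `6`-vector `z`. -/
def IsDeltaEighteen (ψ : M → M → O) (z e₁ e₂ : M) : Prop :=
  z = e₁ ∧ HasGram ψ e₁ e₂ 6 0 0 3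

lemma delta_types_pairwise_exclusive (ψ : M → M → O) (z e₁ e₂ : M) :
    ¬(IsDeltaSix ψ z e₁ e₂ ∧ IsDeltaNine ψ z e₁ e₂) ∧
    ¬(IsDeltaSix ψ z e₁ e₂ ∧ IsDeltaFifteen ψ z e₁ e₂) ∧
    ¬(IsDeltaSix ψ z e₁ e₂ ∧ IsDeltaEighteen ψ z e₁ e₂) ∧
    ¬(IsDeltaNine ψ z e₁ e₂ ∧ IsDeltaFifteen ψ z e₁ e₂) ∧
    ¬(IsDeltaNine ψ z e₁ e₂ ∧ IsDeltaEighteen ψ z e₁ e₂) ∧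
    ¬(IsDeltaFifteen ψ z e₁ e₂ ∧ IsDeltaEighteen ψ z e₁ e₂) := by
  have hne : (3 : O) ≠ 6 := by norm_num
  refine ⟨?_, ?_, ?_, ?_, ?_, ?_⟩ <;> rintro ⟨⟨-, h₁₁, h₁₂, -⟩, -, h₁₁', h₁₂', -⟩
  · exact θ_ne_zero (h₁₂.symm.trans h₁₂')
  · exact hne (h₁₁.symm.trans h₁₁')
  · exact hne (h₁₁.symm.trans h₁₁')
  · exact hne (h₁₁.symm.trans h₁₁')
  · exact hne (h₁₁.symm.trans h₁₁')
  · exact θ_ne_zero (h₁₂.symm.trans h₁₂')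

end Gram

/-! ### Hermitian forms over the Eisenstein integers -/

section Form

variable {M : Type*} [AddCommGroup M] [Module O M] {ψ : M → M → O}

/-- `ψ` is the Hermitian form of an `𝒪`-lattice: `𝒪`-linear in the first variable, conjugate
symmetric, and with all its values in `θ𝒪`. -/
structure IsLatticeForm (ψ : M → M → O) : Prop where
  add_left : ∀ x x' y, ψ (x + x') y = ψ x y + ψ x' y
  smul_left : ∀ (a : O) (x y : M), ψ (a • x) y = a * ψ x y
  conj_symm : ∀ x y, ψ y x = conj (ψ x y)
  exists_eq_θ_mul : ∀ x y, ∃ c : O, ψ x y = θ * c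

namespace IsLatticeForm

variable (H : IsLatticeForm ψ)
include H

lemma add_right (x y y' : M) : ψ x (y + y') = ψ x y + ψ x y' := by
  rw [H.conj_symm (y + y') x, H.add_left, map_add, ← H.conj_symm, ← H.conj_symm]

lemma smul_right (a : O) (x y : M) : ψ x (a • y) = conj a * ψ x y := by
  rw [H.conj_symm (a • y) x, H.smul_left, map_mul, ← H.conj_symm]

lemma zero_left (y : M) : ψ 0 y = 0 := by
  simpa using H.smul_left 0 0 y

lemma sub_left (x x' y : M) : ψ (x - x') y = ψ x y - ψ x' y :=
  eq_sub_of_add_eq (by rw [← H.add_left, sub_add_cancel])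

lemma sub_right (x y y' : M) : ψ x (y - y') = ψ x y - ψ x y' :=
  eq_sub_of_add_eq (by rw [← H.add_right, sub_add_cancel])

lemma exists_self_eq_three_mul (x : M) : ∃ k : ℤ, ψ x x = 3 * k := by
  obtain ⟨n, hn⟩ := exists_intCast_eq_of_conj_eq (H.conj_symm x x).symm
  obtain ⟨c, hc⟩ := H.exists_eq_θ_mul x x
  obtain ⟨k, rfl⟩ := three_dvd_of_θ_dvd_intCast ⟨c, hn.symm.trans hc⟩
  exact ⟨k, mod_cast hn⟩

lemma mul_symm_eq {x y : M} {c : O} (hc : ψ x y = θ * c) :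
    ψ x y * ψ y x = 3 * intNorm c := by
  rw [H.conj_symm x y, hc, map_mul, conj_θ, intCast_intNorm]
  linear_combination -c * conj c * θ_sq

/-- The norms of `𝒪` are `0` or `1` modulo `3`. -/
lemma exists_gramDet_eq_three_mul (x y : M) :
    ∃ t : ℤ, gramDet ψ x y = 3 * t ∧ t % 3 ≠ 1 := by
  obtain ⟨k, hk⟩ := H.exists_self_eq_three_mul x
  obtain ⟨l, hl⟩ := H.exists_self_eq_three_mul y
  obtain ⟨c, hc⟩ := H.exists_eq_θ_mul x y
  refine ⟨3 * (k * l) - intNorm c, ?_, ?_⟩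
  · rw [gramDet, hk, hl, H.mul_symm_eq hc]
    push_cast
    ring
  · have := intNorm_emod_three c
    omega

lemma self_smul_add_smul (p q : O) (e f : M) :
    ψ (p • e + q • f) (p • e + q • f) = p * conj p * ψ e e + p * conj q * ψ e f
      + q * conj p * ψ f e + q * conj q * ψ f f := by
  simp only [H.add_left, H.add_right, H.smul_left, H.smul_right]
  ring

lemma gramDet_smul_add_smul (p q : O) (e f : M) :
    gramDet ψ (p • e + q • f) f = p * conj p * gramDet ψ e f := by
  simp only [gramDet, H.add_left, H.add_right, H.smul_left, H.smul_right]
  ring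

lemma linearIndependent_of_gramDet_ne_zero {e f : M} (hdet : gramDet ψ e f ≠ 0) :
    LinearIndependent O ![e, f] := by
  rw [LinearIndependent.pair_iff]
  intro a b hab
  have hpair (y : M) : a * ψ e y + b * ψ f y = 0 := by
    rw [← H.smul_left, ← H.smul_left, ← H.add_left, hab, H.zero_left]
  exact eq_zero_and_eq_zero_of_gramDet_ne_zero hdet (hpair e) (hpair f)

/-- The discriminant of `(m, f)` is `|p / d|²` times that of `(e, f)`, and both are constrained by
`exists_gramDet_eq_three_mul`. -/
lemma exists_intNorm_coeff_eq {e f m : M} {d : ℤ} {p q : O} (hd : d ≠ 0)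
    (hdet : gramDet ψ e f = 3 * d) (hm : (d : O) • m = p • e + q • f) :
    ∃ t : ℤ, intNorm p = d * t ∧ t % 3 ≠ 1 := by
  obtain ⟨t, ht, ht3⟩ := H.exists_gramDet_eq_three_mul m f
  refine ⟨t, intNorm_eq_iff.2 ?_, ht3⟩
  have hsmul : gramDet ψ ((d : O) • m) f = d * d * (3 * t) := by
    simpa [ht] using H.gramDet_smul_add_smul d 0 m f
  rw [hm, H.gramDet_smul_add_smul, hdet] at hsmul
  refine mul_left_cancel₀ (mul_ne_zero (by norm_num) (Int.cast_ne_zero.2 hd) : (3 : O) * d ≠ 0) ?_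
  push_cast
  linear_combination hsmul

lemma three_mul_intNorm_le {L : Submodule O M} (hnonneg : ∀ x ∈ L, ∃ n : ℕ, ψ x x = n)
    {x z : M} (hx : x ∈ L) (hz : z ∈ L) {a b : ℤ} (ha : 0 < a) (hxx : ψ x x = a)
    (hzz : ψ z z = b) {c : O} (hc : ψ x z = θ * c) : 3 * intNorm c ≤ a * b := by
  obtain ⟨n, hn⟩ := hnonneg ((a : O) • z - ψ z x • x)
    (L.sub_mem (L.smul_mem _ hz) (L.smul_mem _ hx))
  simp only [H.sub_left, H.sub_right, H.smul_left, H.smul_right, ← H.conj_symm z x, map_intCast,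
    hxx, hzz] at hn
  have hcast : (a * (a * b - 3 * intNorm c) : ℤ) = n := by
    have : (a * (a * b - 3 * intNorm c) : O) = n := by
      linear_combination hn + a * H.mul_symm_eq hc
    exact_mod_cast this
  have := nonneg_of_mul_nonneg_right (hcast.symm ▸ n.cast_nonneg) ha
  omega

lemma exists_natCast_of_posDef {L : Submodule O M}
    (hpos : ∀ x ∈ L, x ≠ 0 → ∃ n : ℕ, 0 < n ∧ ψ x x = (n : O)) {x : M} (hx : x ∈ L) :
    ∃ n : ℕ, ψ x x = n := by
  by_cases hx0 : x = 0
  · exact ⟨0, by rw [hx0, H.zero_left, Nat.cast_zero]⟩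
  · obtain ⟨n, -, hn⟩ := hpos x hx hx0
    exact ⟨n, hn⟩

end IsLatticeForm

namespace IsLatticeForm

variable (H : IsLatticeForm ψ)
include H

lemma exists_self_eq_three_and_eq {L : Submodule O M}
    (hnonneg : ∀ x ∈ L, ∃ n : ℕ, ψ x x = n) {x z : M} (hx : x ∈ L) (hx3 : ψ x x = 3)
    (hz : z ∈ L) (hz6 : ψ z z = 6) (hxz : ψ x z ≠ 0) :
    ∃ y ∈ L, ψ y y = 3 ∧ (ψ y z = -θ ∨ ψ y z = 3 ∨ ψ y z = 3 + θ) := by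
  obtain ⟨c, hc⟩ := H.exists_eq_θ_mul x z
  have hc0 : c ≠ 0 := right_ne_zero_of_mul (hc ▸ hxz)
  have hle : 3 * intNorm c ≤ 3 * 6 :=
    H.three_mul_intNorm_le hnonneg hx hz three_pos (mod_cast hx3) (mod_cast hz6) hc
  obtain ⟨u, hu, huc⟩ := exists_unit_mul_eq_of_intNorm_le_six hc0 (by omega)
  refine ⟨u • x, L.smul_mem u hx, ?_, ?_⟩
  · have huu : u * conj u = 1 := mod_cast intNorm_eq_iff.1 hu
    rw [H.smul_left, H.smul_right, hx3]
    linear_combination 3 * huu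
  · have huz : ψ (u • x) z = θ * (u * c) := by
      rw [H.smul_left, hc]
      ring
    rw [huz]
    rcases huc with h | h | h <;> rw [h]
    · exact Or.inl (mul_neg_one θ)
    · exact Or.inr (Or.inl (by linear_combination -θ_sq))
    · exact Or.inr (Or.inr (by linear_combination -θ_sq))

lemma hasGram_sub {y z : M} (hy3 : ψ y y = 3) (hz6 : ψ z z = 6) {b : O}
    (hyz : ψ y z = 3 + b) (hb : b + conj b = 0) : HasGram ψ y (z - y) 3 b (-b) 3 := by
  have hzy : ψ z y = 3 + conj b := by rw [H.conj_symm y z, hyz, map_add, map_ofNat]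
  refine ⟨hy3, ?_, ?_, ?_⟩ <;> simp only [H.sub_left, H.sub_right, hyz, hzy, hy3, hz6]
  · ring
  · linear_combination hb
  · linear_combination -hb

lemma exists_delta_of_not_orthogonal {L : Submodule O M}
    (hnonneg : ∀ x ∈ L, ∃ n : ℕ, ψ x x = n) {x z : M} (hx : x ∈ L) (hx3 : ψ x x = 3)
    (hz : z ∈ L) (hz6 : ψ z z = 6) (hxz : ψ x z ≠ 0) :
    ∃ e₁ ∈ L, ∃ e₂ ∈ L,
      IsDeltaSix ψ z e₁ e₂ ∨ IsDeltaNine ψ z e₁ e₂ ∨ IsDeltaFifteen ψ z e₁ e₂ := by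
  obtain ⟨y, hy, hy3, hyz | hyz | hyz⟩ :=
    H.exists_self_eq_three_and_eq hnonneg hx hx3 hz hz6 hxz
  · have hzy : ψ z y = θ := by rw [H.conj_symm y z, hyz, map_neg, conj_θ, neg_neg]
    exact ⟨z, hz, y, hy, Or.inr (Or.inr ⟨rfl, hz6, hzy, hyz, hy3⟩)⟩
  · have hgram : HasGram ψ y (z - y) 3 0 (-0) 3 :=
      H.hasGram_sub hy3 hz6 (by rw [hyz, add_zero]) (by rw [map_zero, add_zero])
    rw [neg_zero] at hgram
    exact ⟨y, hy, z - y, L.sub_mem hz hy, Or.inr (Or.inl ⟨(add_sub_cancel y z).symm, hgram⟩)⟩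
  · have hgram := H.hasGram_sub hy3 hz6 hyz (by rw [conj_θ, add_neg_cancel])
    exact ⟨y, hy, z - y, L.sub_mem hz hy, Or.inl ⟨(add_sub_cancel y z).symm, hgram⟩⟩

end IsLatticeForm

/-! ### Overlattices -/

namespace IsLatticeForm

variable (H : IsLatticeForm ψ)
include H

lemma hasGram_deltaSix_of_θ_smul_eq {e f y : M} {s : ℤ} (hgram : HasGram ψ e f 6 0 0 3)
    (hs : s ^ 2 = 1) (hy : θ • y = e + (s : O) • f) :
    HasGram ψ ((s : O) • f) y 3 θ (-θ) 3 := by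
  obtain ⟨hee, hef, hfe, hff⟩ := hgram
  have hs1 : (s : O) ^ 2 = 1 := mod_cast hs
  have hyf : ψ y ((s : O) • f) = -θ := by
    refine mul_left_cancel₀ θ_ne_zero ?_
    rw [← H.smul_left, hy, H.add_left, H.smul_left, H.smul_right, H.smul_right, map_intCast, hef,
      hff]
    linear_combination 3 * hs1 + θ_sq
  refine ⟨?_, by rw [H.conj_symm y, hyf, map_neg, conj_θ, neg_neg], hyf, ?_⟩
  · rw [H.smul_left, H.smul_right, map_intCast, hff]
    linear_combination 3 * hs1
  · have hself : ψ (θ • y) (θ • y) = 9 := by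
      rw [hy, H.add_left, H.add_right, H.add_right, H.smul_left, H.smul_right, H.smul_left,
        H.smul_right, map_intCast, hee, hef, hfe, hff]
      linear_combination 3 * hs1
    rw [H.smul_left, H.smul_right, conj_θ] at hself
    refine mul_left_cancel₀ (by norm_num : (3 : O) ≠ 0) ?_
    linear_combination hself + ψ y y * θ_sq

variable [Module.IsTorsionFree O M]

lemma exists_mem_θ_smul_eq {L : Submodule O M} {e f m : M} (he : e ∈ L) (hf : f ∈ L) (hm : m ∈ L)
    (hgram : HasGram ψ e f 6 0 0 3) (hspan : m ∉ Submodule.span O {e, f}) {a b : O}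
    (hab : θ • m = a • e + b • f) :
    ∃ y ∈ L, ∃ s : ℤ, s ^ 2 = 1 ∧ θ • y = e + (s : O) • f := by
  obtain ⟨hee, hef, hfe, hff⟩ := hgram
  obtain ⟨k, hk⟩ := H.exists_self_eq_three_mul m
  have hnorm : 2 * intNorm a + intNorm b = 3 * k := by
    have hself := H.self_smul_add_smul a b e f
    rw [← hab, H.smul_left, H.smul_right, conj_θ, hk, hee, hef, hfe, hff, ← intCast_intNorm,
      ← intCast_intNorm] at hself
    have : (3 : O) * (2 * intNorm a + intNorm b) = 3 * (3 * k) := by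
      linear_combination -hself - 3 * k * θ_sq
    exact_mod_cast mul_left_cancel₀ (by norm_num) this
  obtain ⟨r, hr, ⟨a', ha⟩, har⟩ := exists_residue_mod_θ a
  obtain ⟨s, hs, ⟨b', hb⟩, hbs⟩ := exists_residue_mod_θ b
  have hshift : θ • (m - a' • e - b' • f) = (r : O) • e + (s : O) • f := by
    rw [smul_sub, smul_sub, hab, sub_eq_iff_eq_add.1 ha, sub_eq_iff_eq_add.1 hb]
    module
  -- Modulo `3`, `hnorm` says that `r² = s²`, and `r = s = 0` would put `m` in the span.
  have hrs : r ^ 2 = 1 ∧ s ^ 2 = 1 := by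
    rcases hr with rfl | rfl | rfl <;> rcases hs with rfl | rfl | rfl <;>
      norm_num [Int.ModEq] at har hbs ⊢ <;> try omega
    refine hspan (Submodule.mem_span_pair.2 ⟨a', b', ?_⟩)
    rw [Int.cast_zero, zero_smul, zero_smul, add_zero, smul_eq_zero_iff_right θ_ne_zero, sub_sub,
      sub_eq_zero] at hshift
    exact hshift.symm
  have hr1 : (r : O) ^ 2 = 1 := mod_cast hrs.1
  refine ⟨(r : O) • (m - a' • e - b' • f), ?_, r * s, by rw [mul_pow, hrs.1, hrs.2, one_mul], ?_⟩
  · exact L.smul_mem _ (L.sub_mem (L.sub_mem hm (L.smul_mem _ he)) (L.smul_mem _ hf))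
  · rw [smul_comm, hshift, smul_add, smul_smul, smul_smul, ← sq, hr1, one_smul, Int.cast_mul]

variable [Module.Finite O M] (hrank : Module.finrank O M = 2)
include hrank

lemma eq_zero_of_orthogonal_pair {e f v : M} (hdet : gramDet ψ e f ≠ 0) (hve : ψ v e = 0)
    (hvf : ψ v f = 0) : v = 0 := by
  have hdep : ¬LinearIndependent O ![v, e, f] := fun hli => by
    have := hli.fintype_card_le_finrank
    rw [hrank, Fintype.card_fin] at this
    omega
  obtain ⟨g, hg, i, hi⟩ := Fintype.not_linearIndependent_iff.1 hdep
  replace hg : g 0 • v + g 1 • e + g 2 • f = 0 := by simpa [Fin.sum_univ_three] using hg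
  have hpair {y : M} (hvy : ψ v y = 0) : g 1 * ψ e y + g 2 * ψ f y = 0 := by
    simpa [H.add_left, H.smul_left, hvy, H.zero_left] using congrArg (ψ · y) hg
  obtain ⟨h1, h2⟩ := eq_zero_and_eq_zero_of_gramDet_ne_zero hdet (hpair hve) (hpair hvf)
  rw [h1, h2, zero_smul, zero_smul, add_zero, add_zero] at hg
  refine (smul_eq_zero.1 hg).resolve_left fun h0 => hi ?_
  fin_cases i <;> assumption

/-- Cramer's rule: since `ψ` takes values in `θ𝒪`, all the determinants are divisible by `3`. -/
lemma exists_smul_eq_add {e f : M} {d : ℤ} (hd : d ≠ 0) (hdet : gramDet ψ e f = 3 * d) (m : M) :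
    ∃ p q : O, (d : O) • m = p • e + q • f := by
  have hthree : (3 : O) ≠ 0 := by norm_num
  have hdet0 : gramDet ψ e f ≠ 0 := hdet ▸ mul_ne_zero hthree (Int.cast_ne_zero.2 hd)
  have hdvd (x y x' y' : M) : ∃ c, 3 * c = ψ x y * ψ x' y' := by
    obtain ⟨a, ha⟩ := H.exists_eq_θ_mul x y
    obtain ⟨b, hb⟩ := H.exists_eq_θ_mul x' y'
    exact ⟨-(a * b), by rw [ha, hb]; linear_combination -(a * b) * θ_sq⟩
  obtain ⟨p₁, hp₁⟩ := hdvd m e f f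
  obtain ⟨p₂, hp₂⟩ := hdvd m f f e
  obtain ⟨q₁, hq₁⟩ := hdvd m f e e
  obtain ⟨q₂, hq₂⟩ := hdvd m e e f
  rw [gramDet] at hdet
  refine ⟨p₁ - p₂, q₁ - q₂, sub_eq_zero.1 ?_⟩
  refine H.eq_zero_of_orthogonal_pair hrank hdet0 ?_ ?_ <;>
    rw [H.sub_left, H.add_left, H.smul_left, H.smul_left, H.smul_left] <;>
    refine mul_left_cancel₀ hthree ?_
  · linear_combination -ψ m e * hdet - ψ e e * (hp₁ - hp₂) - ψ f e * (hq₁ - hq₂)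
  · linear_combination -ψ m f * hdet - ψ e f * (hp₁ - hp₂) - ψ f f * (hq₁ - hq₂)

/-- The coefficients of `d • m` in terms of `e, f` have norm divisible by `d`.  As `2` and `5` are
inert in `𝒪`, this makes them divisible by `d`; for `d = 3` it only gives a factor `θ`, and the
second one comes from `exists_gramDet_eq_three_mul`. -/
lemma span_pair_eq_top {e f : M} {d : ℤ} (hd : d = 2 ∨ d = 3 ∨ d = 5)
    (hdet : gramDet ψ e f = 3 * d) : Submodule.span O {e, f} = ⊤ := by
  have hd0 : d ≠ 0 := by omega
  refine eq_top_iff.2 fun m _ => Submodule.mem_span_pair.2 ?_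
  obtain ⟨p, q, hm⟩ := H.exists_smul_eq_add hrank hd0 hdet m
  obtain ⟨t, ht, ht3⟩ := H.exists_intNorm_coeff_eq hd0 hdet hm
  obtain ⟨t', ht', ht3'⟩ :=
    H.exists_intNorm_coeff_eq hd0 ((gramDet_comm ψ f e).trans hdet) (hm.trans (add_comm _ _))
  obtain ⟨p, rfl⟩ := intCast_dvd_of_intNorm_eq_mul hd ht ht3
  obtain ⟨q, rfl⟩ := intCast_dvd_of_intNorm_eq_mul hd ht' ht3'
  refine ⟨p, q, smul_right_injective M (Int.cast_ne_zero.2 hd0 : (d : O) ≠ 0) ?_⟩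
  simp only [hm, smul_add, smul_smul]

lemma exists_θ_smul_eq_add {e f : M} (hgram : HasGram ψ e f 6 0 0 3) (m : M) :
    ∃ a b : O, θ • m = a • e + b • f := by
  have hdet : gramDet ψ e f = 3 * (6 : ℤ) := by
    rw [hgram.gramDet_eq]
    norm_num
  have hdet' : gramDet ψ f e = 3 * (6 : ℤ) := (gramDet_comm ψ f e).trans hdet
  obtain ⟨p, q, hm⟩ := H.exists_smul_eq_add hrank (by norm_num) hdet m
  obtain ⟨t, ht, -⟩ := H.exists_intNorm_coeff_eq (by norm_num) hdet hm
  obtain ⟨t', ht', -⟩ :=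
    H.exists_intNorm_coeff_eq (by norm_num) hdet' (hm.trans (add_comm _ _))
  obtain ⟨a, rfl⟩ := two_mul_θ_dvd_of_six_dvd_intNorm ⟨t, ht⟩
  obtain ⟨b, rfl⟩ := two_mul_θ_dvd_of_six_dvd_intNorm ⟨t', ht'⟩
  refine ⟨-a, -b, smul_right_injective M (mul_ne_zero two_ne_zero θ_ne_zero : 2 * θ ≠ 0) ?_⟩
  have hsix : 2 * θ * θ = -(6 : ℤ) := by
    push_cast
    linear_combination 2 * θ_sq
  change (2 * θ) • θ • m = (2 * θ) • (-a • e + -b • f)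
  rw [smul_smul, hsix, neg_smul, hm]
  module

lemma exists_deltaSix_of_notMem_span {L : Submodule O M} {z x m : M} (hz : z ∈ L) (hx : x ∈ L)
    (hm : m ∈ L) (hgram : HasGram ψ z x 6 0 0 3) (hspan : m ∉ Submodule.span O {z, x}) :
    ∃ e ∈ L, ∃ f ∈ L, HasGram ψ e f 3 θ (-θ) 3 ∧ ψ f z ≠ 0 := by
  obtain ⟨a, b, hab⟩ := H.exists_θ_smul_eq_add hrank hgram m
  obtain ⟨y, hy, s, hs, hys⟩ := H.exists_mem_θ_smul_eq hz hx hm hgram hspan hab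
  refine ⟨(s : O) • x, L.smul_mem _ hx, y, hy, H.hasGram_deltaSix_of_θ_smul_eq hgram hs hys, ?_⟩
  have hyz : θ * ψ y z = 6 := by
    rw [← H.smul_left, hys, H.add_left, H.smul_left, hgram.1, hgram.2.2.1, mul_zero, add_zero]
  have hne : θ * ψ y z ≠ 0 := by
    rw [hyz]
    norm_num
  exact right_ne_zero_of_mul hne

lemma span_pair_eq_of_forall_orthogonal {L : Submodule O M} {z x : M} (hz : z ∈ L)
    (hz6 : ψ z z = 6) (hx : x ∈ L) (hx3 : ψ x x = 3)
    (horth : ∀ y ∈ L, ψ y y = 3 → ψ y z = 0) :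
    HasGram ψ z x 6 0 0 3 ∧ Submodule.span O {z, x} = L := by
  have hxz : ψ x z = 0 := horth x hx hx3
  have hgram : HasGram ψ z x 6 0 0 3 :=
    ⟨hz6, by rw [H.conj_symm x z, hxz, map_zero], hxz, hx3⟩
  refine ⟨hgram, le_antisymm (Submodule.span_le.2 (Set.pair_subset hz hx)) fun m hm => ?_⟩
  by_contra hmem
  obtain ⟨-, -, f, hf, ⟨-, -, -, hff⟩, hfz⟩ :=
    H.exists_deltaSix_of_notMem_span hrank hz hx hm hgram hmem
  exact hfz (horth f hf hff)

lemma span_pair_eq_top_of_isDelta {z e₁ e₂ : M}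
    (h : IsDeltaSix ψ z e₁ e₂ ∨ IsDeltaNine ψ z e₁ e₂ ∨ IsDeltaFifteen ψ z e₁ e₂) :
    Submodule.span O {e₁, e₂} = ⊤ ∧ LinearIndependent O ![e₁, e₂] := by
  obtain ⟨d, hd, hdet⟩ : ∃ d : ℤ, (d = 2 ∨ d = 3 ∨ d = 5) ∧ gramDet ψ e₁ e₂ = 3 * d := by
    rcases h with ⟨-, h⟩ | ⟨-, h⟩ | ⟨-, h⟩
    · refine ⟨2, by norm_num, h.gramDet_eq.trans ?_⟩
      push_cast
      linear_combination θ_sq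
    · refine ⟨3, by norm_num, h.gramDet_eq.trans ?_⟩
      norm_num
    · refine ⟨5, by norm_num, h.gramDet_eq.trans ?_⟩
      push_cast
      linear_combination θ_sq
  have hd0 : (d : O) ≠ 0 := Int.cast_ne_zero.2 (by omega)
  refine ⟨H.span_pair_eq_top hrank hd hdet, H.linearIndependent_of_gramDet_ne_zero ?_⟩
  exact hdet ▸ mul_ne_zero (by norm_num) hd0

end IsLatticeForm

end Form

lemma nonempty_of_one_lt_finrank_span_singleton_union {R V : Type*} [Semiring R]
    [StrongRankCondition R] [AddCommMonoid V] [Module R V] {v : V} {s : Set V}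
    (h : 1 < Module.finrank R (Submodule.span R ({v} ∪ s))) : s.Nonempty := by
  by_contra hs
  rw [Set.not_nonempty_iff_eq_empty.1 hs, Set.union_empty] at h
  have := finrank_span_le_card (R := R) ({v} : Set V)
  simp only [Set.toFinset_singleton, Finset.card_singleton] at this
  omega

end EisensteinLattice

open EisensteinLattice in
theorem statement10_general {M : Type*} [AddCommGroup M] [Module O M] [Module.IsTorsionFree O M]
    [Module.Finite O M] (hMrank : Module.finrank O M = 2) {ψ : M → M → O} (H : IsLatticeForm ψ)
    {L : Submodule O M} (hLnonneg : ∀ x ∈ L, ∃ n : ℕ, ψ x x = n) {z x : M} (hzL : z ∈ L)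
    (hz6 : ψ z z = 6) (hxL : x ∈ L) (hx3 : ψ x x = 3) :
    (∃ e₁ e₂ : M, e₁ ∈ L ∧ e₂ ∈ L ∧ Submodule.span O {e₁, e₂} = L ∧
      LinearIndependent O ![e₁, e₂] ∧
      (IsDeltaSix ψ z e₁ e₂ ∨ IsDeltaNine ψ z e₁ e₂ ∨ IsDeltaFifteen ψ z e₁ e₂ ∨
        IsDeltaEighteen ψ z e₁ e₂) ∧
      ¬(IsDeltaSix ψ z e₁ e₂ ∧ IsDeltaNine ψ z e₁ e₂) ∧
      ¬(IsDeltaSix ψ z e₁ e₂ ∧ IsDeltaFifteen ψ z e₁ e₂) ∧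
      ¬(IsDeltaSix ψ z e₁ e₂ ∧ IsDeltaEighteen ψ z e₁ e₂) ∧
      ¬(IsDeltaNine ψ z e₁ e₂ ∧ IsDeltaFifteen ψ z e₁ e₂) ∧
      ¬(IsDeltaNine ψ z e₁ e₂ ∧ IsDeltaEighteen ψ z e₁ e₂) ∧
      ¬(IsDeltaFifteen ψ z e₁ e₂ ∧ IsDeltaEighteen ψ z e₁ e₂)) ∧
    (L ≠ ⊤ →
      (∃ e₁ e₂ : M, e₁ ∈ L ∧ e₂ ∈ L ∧ Submodule.span O {e₁, e₂} = L ∧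
        LinearIndependent O ![e₁, e₂] ∧ IsDeltaEighteen ψ z e₁ e₂) ∧
      (∃ m₁ m₂ : M, Submodule.span O {m₁, m₂} = ⊤ ∧ LinearIndependent O ![m₁, m₂] ∧
        HasGram ψ m₁ m₂ 3 θ (-θ) 3)) := by
  by_cases horth : ∀ y ∈ L, ψ y y = 3 → ψ y z = 0
  · obtain ⟨hgram, hspan⟩ := H.span_pair_eq_of_forall_orthogonal hMrank hzL hz6 hxL hx3 horth
    have hli : LinearIndependent O ![z, x] :=
      H.linearIndependent_of_gramDet_ne_zero (by rw [hgram.gramDet_eq]; norm_num)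
    refine ⟨⟨z, x, hzL, hxL, hspan, hli, Or.inr (Or.inr (Or.inr ⟨rfl, hgram⟩)),
      delta_types_pairwise_exclusive ψ z z x⟩,
      fun hL => ⟨⟨z, x, hzL, hxL, hspan, hli, rfl, hgram⟩, ?_⟩⟩
    obtain ⟨m, -, hm⟩ := SetLike.exists_of_lt (hspan ▸ lt_top_iff_ne_top.2 hL)
    obtain ⟨m₁, -, m₂, -, hm₁₂, -⟩ := H.exists_deltaSix_of_notMem_span hMrank (L := ⊤)
      Submodule.mem_top Submodule.mem_top Submodule.mem_top hgram hm
    obtain ⟨htop, hli'⟩ := H.span_pair_eq_top_of_isDelta hMrank (Or.inl ⟨rfl, hm₁₂⟩)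
    exact ⟨m₁, m₂, htop, hli', hm₁₂⟩
  · push Not at horth
    obtain ⟨y, hyL, hy3, hyz⟩ := horth
    obtain ⟨e₁, he₁, e₂, he₂, hδ⟩ :=
      H.exists_delta_of_not_orthogonal hLnonneg hyL hy3 hzL hz6 hyz
    obtain ⟨htop, hli⟩ := H.span_pair_eq_top_of_isDelta hMrank hδ
    have hL : L = ⊤ := top_le_iff.1 (htop ▸ Submodule.span_le.2 (Set.pair_subset he₁ he₂))
    exact ⟨⟨e₁, e₂, he₁, he₂, htop.trans hL.symm, hli, by tauto,
      delta_types_pairwise_exclusive ψ z e₁ e₂⟩, fun h => absurd hL h⟩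

/-- Let `L` be a positive definite 𝒪-lattice of rank two containing a
6-vector `z` and spanned as an 𝒪-module by `z` together with the 3-vectors of `L`.
Then `L` has an 𝒪-basis `(e₁, e₂)` for which exactly one of the four cases
`δ₆, δ₉, δ₁₅, δ₁₈` holds (`z = e₁ + e₂` with Gram matrix `[[3,θ],[−θ,3]]` resp.
`[[3,0],[0,3]]`, or `z = e₁` with Gram matrix `[[6,θ],[−θ,3]]` resp. `[[6,0],[0,3]]`,
of discriminants `6, 9, 15, 18`).  Moreover, if `L` is a *proper* 𝒪-submodule of a
rank-two 𝒪-lattice `M` with the same Hermitian form, then `L` is of type `δ₁₈` and `M`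
is isomorphic to the lattice of type `δ₆`.  (Here `L` is realized as a submodule of an
ambient rank-two 𝒪-lattice `M`; taking `L = M` recovers the first assertion for an
arbitrary such `L`.) -/
theorem statement10 (M : Type*) [AddCommGroup M] [Module O M]
    [Module.Free O M] [Module.Finite O M]
    (hMrank : Module.finrank O M = 2)
    (ψ : M → M → O)
    (hψ_add : ∀ x x' y, ψ (x + x') y = ψ x y + ψ x' y)
    (hψ_smul : ∀ (a : O) (x y : M), ψ (a • x) y = a * ψ x y)
    (hψ_herm : ∀ x y, ψ y x = conj (ψ x y))
    (hψ_theta : ∀ x y, ∃ c : O, ψ x y = θ * c)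
    (L : Submodule O M)
    (hLrank : Module.finrank O ↥L = 2)
    (hLpos : ∀ x ∈ L, x ≠ 0 → ∃ n : ℕ, 0 < n ∧ ψ x x = (n : O))
    (z : M) (hzL : z ∈ L) (hz6 : ψ z z = 6)
    (hspan : Submodule.span O ({z} ∪ {x : M | x ∈ L ∧ ψ x x = 3}) = L) :
    (∃ e₁ e₂ : M, e₁ ∈ L ∧ e₂ ∈ L ∧ Submodule.span O {e₁, e₂} = L ∧
      LinearIndependent O ![e₁, e₂] ∧
      (let A :=
        z = e₁ + e₂ ∧ ψ e₁ e₁ = 3 ∧ ψ e₁ e₂ = θ ∧ ψ e₂ e₁ = -θ ∧ ψ e₂ e₂ = 3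
       let B :=
        z = e₁ + e₂ ∧ ψ e₁ e₁ = 3 ∧ ψ e₁ e₂ = 0 ∧ ψ e₂ e₁ = 0 ∧ ψ e₂ e₂ = 3
       let C :=
        z = e₁ ∧ ψ e₁ e₁ = 6 ∧ ψ e₁ e₂ = θ ∧ ψ e₂ e₁ = -θ ∧ ψ e₂ e₂ = 3
       let D :=
        z = e₁ ∧ ψ e₁ e₁ = 6 ∧ ψ e₁ e₂ = 0 ∧ ψ e₂ e₁ = 0 ∧ ψ e₂ e₂ = 3
       (A ∨ B ∨ C ∨ D) ∧
       ¬(A ∧ B) ∧ ¬(A ∧ C) ∧ ¬(A ∧ D) ∧ ¬(B ∧ C) ∧ ¬(B ∧ D) ∧ ¬(C ∧ D))) ∧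
    (L ≠ ⊤ →
      (∃ e₁ e₂ : M, e₁ ∈ L ∧ e₂ ∈ L ∧ Submodule.span O {e₁, e₂} = L ∧
        LinearIndependent O ![e₁, e₂] ∧
        z = e₁ ∧ ψ e₁ e₁ = 6 ∧ ψ e₁ e₂ = 0 ∧ ψ e₂ e₁ = 0 ∧ ψ e₂ e₂ = 3) ∧
      (∃ m₁ m₂ : M, Submodule.span O {m₁, m₂} = ⊤ ∧
        LinearIndependent O ![m₁, m₂] ∧
        ψ m₁ m₁ = 3 ∧ ψ m₁ m₂ = θ ∧ ψ m₂ m₁ = -θ ∧ ψ m₂ m₂ = 3)) := by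
  obtain ⟨x, hxL, hx3⟩ := EisensteinLattice.nonempty_of_one_lt_finrank_span_singleton_union
    (by rw [hspan, hLrank]; exact one_lt_two)
  have H : EisensteinLattice.IsLatticeForm ψ := ⟨hψ_add, hψ_smul, hψ_herm, hψ_theta⟩
  exact statement10_general hMrank H (fun _ => H.exists_natCast_of_posDef hLpos) hzL hz6 hxL hx3

end
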